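/- There exists a constant c such that for every finite set AP of atomic propositions, finite set Γ of edge labels, every ICPDL(AP,Γ) sentence Φ, and every k > 0, there is an ICPDL(AP^k, {↓0,↓1}) sentence Φ~^k of size at most c·k²·|Φ| such that for every valid k-STT τ with ⟦τ⟧ = (G,χ): G ⊨ Φ if and only if τ ⊨ Φ~^k. Moreover, if Φ is in LCPDL (no intersection of path formulas), then Φ~^k can be chosen in LCPDL. -/

import Mathlib

/-! ### Monadic second-order logic over vertex- and edge-labeled structures -/

/-- MSO formulas over structures with vertex labels `Vl` and binary relations
indexed by `El`.  First-order variables and set variables are indexed by `ℕ`. -/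
inductive GMSO (Vl El : Type) : Type
  | lab (a : Vl) (x : ℕ)
  | edge (γ : El) (x y : ℕ)
  | eq (x y : ℕ)
  | mem (x X : ℕ)
  | or (φ ψ : GMSO Vl El)
  | not (φ : GMSO Vl El)
  | exFO (x : ℕ) (φ : GMSO Vl El)
  | exSO (X : ℕ) (φ : GMSO Vl El)

namespace GMSO

variable {Vl El : Type} {V : Type}

/-- Satisfaction of an MSO formula in a structure with domain `dom`, labeling
relation `lab` and edge relations `edge`, under valuations `ν` (first-order,
partial) and `μ` (second-order). -/
def Sat (dom : Set V) (lab : V → Vl → Prop) (edge : El → V → V → Prop) :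
    (ℕ → Option V) → (ℕ → Set V) → GMSO Vl El → Prop
  | ν, _, .lab a x => ∃ v, ν x = some v ∧ v ∈ dom ∧ lab v a
  | ν, _, .edge γ x y => ∃ u v, ν x = some u ∧ ν y = some v ∧ edge γ u v
  | ν, _, .eq x y => ∃ v, ν x = some v ∧ ν y = some v
  | ν, μ, .mem x X => ∃ v, ν x = some v ∧ v ∈ μ X
  | ν, μ, .or φ ψ => Sat dom lab edge ν μ φ ∨ Sat dom lab edge ν μ ψ
  | ν, μ, .not φ => ¬ Sat dom lab edge ν μ φ
  | ν, μ, .exFO x φ => ∃ v ∈ dom, Sat dom lab edge (Function.update ν x (some v)) μ φ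
  | ν, μ, .exSO X φ => ∃ E : Set V, E ⊆ dom ∧ Sat dom lab edge ν (Function.update μ X E) φ

/-- Free first-order variables. -/
def freeFO : GMSO Vl El → Set ℕ
  | .lab _ x => {x}
  | .edge _ x y => {x, y}
  | .eq x y => {x, y}
  | .mem x _ => {x}
  | .or φ ψ => freeFO φ ∪ freeFO ψ
  | .not φ => freeFO φ
  | .exFO x φ => freeFO φ \ {x}
  | .exSO _ φ => freeFO φ

/-- Free second-order variables. -/
def freeSO : GMSO Vl El → Set ℕ
  | .lab _ _ => ∅
  | .edge _ _ _ => ∅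
  | .eq _ _ => ∅
  | .mem _ X => {X}
  | .or φ ψ => freeSO φ ∪ freeSO ψ
  | .not φ => freeSO φ
  | .exFO _ φ => freeSO φ
  | .exSO X φ => freeSO φ \ {X}

/-- A sentence is a formula without free variables. -/
def Closed (φ : GMSO Vl El) : Prop := freeFO φ = ∅ ∧ freeSO φ = ∅

/-- Satisfaction of a sentence (valuations are irrelevant for sentences). -/
def Models (dom : Set V) (lab : V → Vl → Prop) (edge : El → V → V → Prop)
    (φ : GMSO Vl El) : Prop :=
  Sat dom lab edge (fun _ => none) (fun _ => ∅) φ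

/-- First-order formulas: no second-order quantification. -/
def FirstOrder : GMSO Vl El → Prop
  | .or φ ψ => FirstOrder φ ∧ FirstOrder ψ
  | .not φ => FirstOrder φ
  | .exFO _ φ => FirstOrder φ
  | .exSO _ _ => False
  | _ => True

/-- EMSO formulas: a block of existential second-order quantifiers followed by a
first-order formula. -/
inductive IsEMSO : GMSO Vl El → Prop
  | fo {φ : GMSO Vl El} : FirstOrder φ → IsEMSO φ
  | ex {X : ℕ} {φ : GMSO Vl El} : IsEMSO φ → IsEMSO (.exSO X φ)

end GMSO
/-! ### Labeled binary trees (with unary nodes) and MSO over them -/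

/-- Λ-labeled trees in which every node has 0, 1, or 2 children. -/
inductive BTree (Λ : Type) : Type
  | leaf (l : Λ)
  | unary (l : Λ) (t : BTree Λ)
  | binary (l : Λ) (t₁ t₂ : BTree Λ)

namespace BTree

variable {Λ : Type}

/-- The label at a position (a path from the root; `false` = child 0,
`true` = child 1), if the position exists. -/
def labelAt : BTree Λ → List Bool → Option Λ
  | .leaf l, [] => some l
  | .unary l _, [] => some l
  | .binary l _ _, [] => some l
  | .unary _ t, false :: p => t.labelAt p
  | .binary _ t₁ _, false :: p => t₁.labelAt p
  | .binary _ _ t₂, true :: p => t₂.labelAt p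
  | _, _ => none

/-- The set of node positions of a tree. -/
def positions (t : BTree Λ) : Set (List Bool) := {p | (t.labelAt p).isSome}

/-- The `b`-child relation (`b = false`: child 0, `b = true`: child 1). -/
def childRel (t : BTree Λ) (b : Bool) (p q : List Bool) : Prop :=
  q = p ++ [b] ∧ q ∈ t.positions

/-- Satisfaction of an MSO sentence over the tree (atoms: labels, `↓0`, `↓1`). -/
def TSat (t : BTree Λ) (φ : GMSO Λ Bool) : Prop :=
  GMSO.Models t.positions (fun p l => t.labelAt p = some l) t.childRel φ

end BTree
/-! ### Special tree terms (STTs) and their graph semantics -/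

/-- Special tree terms over vertex labels `Vl` and edge labels `El`,
with colors in `ℕ`. -/
inductive STT (Vl El : Type) : Type
  | atom (i : ℕ) (a : Vl)
  | add (γ : El) (i j : ℕ) (τ : STT Vl El)
  | forget (i : ℕ) (τ : STT Vl El)
  | plus (τ₁ τ₂ : STT Vl El)

namespace STT

variable {Vl El : Type}

/-- The active colors of a term. -/
def activeColors : STT Vl El → Set ℕ
  | .atom i _ => {i}
  | .add _ _ _ τ => τ.activeColors
  | .forget i τ => τ.activeColors \ {i}
  | .plus τ₁ τ₂ => τ₁.activeColors ∪ τ₂.activeColors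

/-- Valid `k`-STTs: colors in `[k] = {1,…,k}`, and the two arguments of `⊕`
have disjoint sets of active colors. -/
def Valid (k : ℕ) : STT Vl El → Prop
  | .atom i _ => 1 ≤ i ∧ i ≤ k
  | .add _ i j τ => 1 ≤ i ∧ i ≤ k ∧ 1 ≤ j ∧ j ≤ k ∧ τ.Valid k
  | .forget i τ => 1 ≤ i ∧ i ≤ k ∧ τ.Valid k
  | .plus τ₁ τ₂ => τ₁.Valid k ∧ τ₂.Valid k ∧ Disjoint τ₁.activeColors τ₂.activeColors

/-- The (partial, injective) coloring `χ_τ`, mapping a color to the position of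
the vertex currently carrying it.  Vertices are identified with the positions
of the atoms in the term (`false` = unique/left child, `true` = right child). -/
def chi : STT Vl El → ℕ → Option (List Bool)
  | .atom i _, j => if j = i then some [] else none
  | .add _ _ _ τ, j => (τ.chi j).map (false :: ·)
  | .forget i τ, j => if j = i then none else (τ.chi j).map (false :: ·)
  | .plus τ₁ τ₂, j =>
      match τ₁.chi j with
      | some p => some (false :: p)
      | none => (τ₂.chi j).map (true :: ·)

/-- The label of a vertex (i.e., of an atom position) of `G_τ`. -/
def vlabel : STT Vl El → List Bool → Option Vl
  | .atom _ a, [] => some a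
  | .add _ _ _ τ, false :: p => τ.vlabel p
  | .forget _ τ, false :: p => τ.vlabel p
  | .plus τ₁ _, false :: p => τ₁.vlabel p
  | .plus _ τ₂, true :: p => τ₂.vlabel p
  | _, _ => none

/-- The vertex set of `G_τ`. -/
def vertices (τ : STT Vl El) : Set (List Bool) := {p | (τ.vlabel p).isSome}

/-- The `γ`-labeled edge relation of `G_τ`. -/
def edgeRel : STT Vl El → El → List Bool → List Bool → Prop
  | .atom _ _, _, _, _ => False
  | .add γ' i j τ, γ, u, v =>
      (∃ u' v', u = false :: u' ∧ v = false :: v' ∧ τ.edgeRel γ u' v') ∨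
      (γ = γ' ∧ ∃ pu pv, τ.chi i = some pu ∧ τ.chi j = some pv ∧
        u = false :: pu ∧ v = false :: pv)
  | .forget _ τ, γ, u, v => ∃ u' v', u = false :: u' ∧ v = false :: v' ∧ τ.edgeRel γ u' v'
  | .plus τ₁ τ₂, γ, u, v =>
      (∃ u' v', u = false :: u' ∧ v = false :: v' ∧ τ₁.edgeRel γ u' v') ∨
      (∃ u' v', u = true :: u' ∧ v = true :: v' ∧ τ₂.edgeRel γ u' v')

/-- `G_τ` is acyclic: the union of all edge relations has an irreflexive
transitive closure. -/
def Acyclic (τ : STT Vl El) : Prop :=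
  ∀ p, ¬ Relation.TransGen (fun u v => ∃ γ, τ.edgeRel γ u v) p p

/-- Satisfaction of a graph-MSO sentence in the graph `G_τ`. -/
def graphSat (τ : STT Vl El) (φ : GMSO Vl El) : Prop :=
  GMSO.Models τ.vertices (fun p a => τ.vlabel p = some a) τ.edgeRel φ

end STT

/-- The label alphabet `Λ^k` of `k`-STTs, seen as labeled binary trees. -/
inductive STTLabel (Vl El : Type) : Type
  | atom (i : ℕ) (a : Vl)
  | add (γ : El) (i j : ℕ)
  | forget (i : ℕ)
  | plus

/-- The binary tree underlying a special tree term. -/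
def STT.toTree {Vl El : Type} : STT Vl El → BTree (STTLabel Vl El)
  | .atom i a => .leaf (.atom i a)
  | .add γ i j τ => .unary (.add γ i j) τ.toTree
  | .forget i τ => .unary (.forget i) τ.toTree
  | .plus τ₁ τ₂ => .binary .plus τ₁.toTree τ₂.toTree
/-! ### ICPDL over labeled graphs -/

mutual
  /-- ICPDL state formulas over atomic propositions `AP` and programs `Γ`. -/
  inductive IcS (AP Γ : Type) : Type
    | prop (p : AP)
    | or (σ₁ σ₂ : IcS AP Γ)
    | not (σ : IcS AP Γ)
    | diam (π : IcP AP Γ) (σ : IcS AP Γ)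
    | loop (π : IcP AP Γ)
  /-- ICPDL path formulas. -/
  inductive IcP (AP Γ : Type) : Type
    | base (γ : Γ)
    | test (σ : IcS AP Γ)
    | plus (π₁ π₂ : IcP AP Γ)
    | comp (π₁ π₂ : IcP AP Γ)
    | star (π : IcP AP Γ)
    | conv (π : IcP AP Γ)
    | inter (π₁ π₂ : IcP AP Γ)
end

/-- ICPDL sentences. -/
inductive IcSentence (AP Γ : Type) : Type
  | ex (σ : IcS AP Γ)
  | or (Φ₁ Φ₂ : IcSentence AP Γ)
  | not (Φ : IcSentence AP Γ)

section IcSem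

variable {AP Γ V : Type}

mutual
  /-- Semantics of ICPDL state formulas in a `(2^AP, Γ)`-labeled graph. -/
  def icSSem (dom : Set V) (lab : V → AP → Prop) (edge : Γ → V → V → Prop) :
      IcS AP Γ → V → Prop
    | .prop p => fun v => v ∈ dom ∧ lab v p
    | .or σ₁ σ₂ => fun v => icSSem dom lab edge σ₁ v ∨ icSSem dom lab edge σ₂ v
    | .not σ => fun v => v ∈ dom ∧ ¬ icSSem dom lab edge σ v
    | .diam π σ => fun v => ∃ w, icPSem dom lab edge π v w ∧ icSSem dom lab edge σ w
    | .loop π => fun v => icPSem dom lab edge π v v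
  /-- Semantics of ICPDL path formulas. -/
  def icPSem (dom : Set V) (lab : V → AP → Prop) (edge : Γ → V → V → Prop) :
      IcP AP Γ → V → V → Prop
    | .base γ => fun u v => edge γ u v
    | .test σ => fun u v => u = v ∧ icSSem dom lab edge σ u
    | .plus π₁ π₂ => fun u v => icPSem dom lab edge π₁ u v ∨ icPSem dom lab edge π₂ u v
    | .comp π₁ π₂ => fun u v => ∃ w, icPSem dom lab edge π₁ u w ∧ icPSem dom lab edge π₂ w v
    | .star π => fun u v =>
        (u ∈ dom ∧ u = v) ∨ Relation.TransGen (fun a b => icPSem dom lab edge π a b) u v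
    | .conv π => fun u v => icPSem dom lab edge π v u
    | .inter π₁ π₂ => fun u v => icPSem dom lab edge π₁ u v ∧ icPSem dom lab edge π₂ u v
end

/-- Semantics of ICPDL sentences. -/
def icSentSem (dom : Set V) (lab : V → AP → Prop) (edge : Γ → V → V → Prop) :
    IcSentence AP Γ → Prop
  | .ex σ => ∃ v ∈ dom, icSSem dom lab edge σ v
  | .or Φ₁ Φ₂ => icSentSem dom lab edge Φ₁ ∨ icSentSem dom lab edge Φ₂
  | .not Φ => ¬ icSentSem dom lab edge Φ

end IcSem

section IcSize

variable {AP Γ : Type}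

mutual
  /-- Size of a state formula. -/
  def IcS.size : IcS AP Γ → ℕ
    | .prop _ => 1
    | .or σ₁ σ₂ => σ₁.size + σ₂.size + 1
    | .not σ => σ.size + 1
    | .diam π σ => π.size + σ.size + 1
    | .loop π => π.size + 1
  /-- Size of a path formula. -/
  def IcP.size : IcP AP Γ → ℕ
    | .base _ => 1
    | .test σ => σ.size + 1
    | .plus π₁ π₂ => π₁.size + π₂.size + 1
    | .comp π₁ π₂ => π₁.size + π₂.size + 1
    | .star π => π.size + 1
    | .conv π => π.size + 1
    | .inter π₁ π₂ => π₁.size + π₂.size + 1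
end

/-- Size of a sentence. -/
def IcSentence.size : IcSentence AP Γ → ℕ
  | .ex σ => σ.size + 1
  | .or Φ₁ Φ₂ => Φ₁.size + Φ₂.size + 1
  | .not Φ => Φ.size + 1

mutual
  /-- LCPDL: no intersection of path formulas. -/
  def IcS.NoInter : IcS AP Γ → Prop
    | .prop _ => True
    | .or σ₁ σ₂ => σ₁.NoInter ∧ σ₂.NoInter
    | .not σ => σ.NoInter
    | .diam π σ => π.NoInter ∧ σ.NoInter
    | .loop π => π.NoInter
  def IcP.NoInter : IcP AP Γ → Prop
    | .base _ => True
    | .test σ => σ.NoInter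
    | .plus π₁ π₂ => π₁.NoInter ∧ π₂.NoInter
    | .comp π₁ π₂ => π₁.NoInter ∧ π₂.NoInter
    | .star π => π.NoInter
    | .conv π => π.NoInter
    | .inter _ _ => False
end

def IcSentence.NoInter : IcSentence AP Γ → Prop
  | .ex σ => σ.NoInter
  | .or Φ₁ Φ₂ => Φ₁.NoInter ∧ Φ₂.NoInter
  | .not Φ => Φ.NoInter

end IcSize

/-- The atomic propositions `AP^k` used on the tree encoding of an STT. -/
inductive APk (AP Γ : Type) : Type
  | base (p : AP)
  | plus
  | color (i : ℕ)
  | add (γ : Γ) (i j : ℕ)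
  | forget (i : ℕ)

/-- The propositions holding at a node of the tree of an STT over vertex labels
`2^AP`: the proposition of the node's `Λ^k`-label, and for a leaf `(i,a)` the
color proposition `color_i` together with the propositions in `a`. -/
def sttTreeLab {AP Γ : Type} (τ : STT (Set AP) Γ) (v : List Bool) :
    APk AP Γ → Prop := fun q =>
  match (STT.toTree τ).labelAt v with
  | some (.atom i a) => q = .color i ∨ ∃ p, q = .base p ∧ p ∈ a
  | some (.add γ i j) => q = .add γ i j
  | some (.forget i) => q = .forget i
  | some .plus => q = .plus
  | none => False

/-! ### Helper material -/

namespace IcAux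

variable {AP Γ : Type}

/-- Subterm at a position. -/
def sub : STT (Set AP) Γ → List Bool → Option (STT (Set AP) Γ)
  | τ, [] => some τ
  | .add _ _ _ τ, false :: p => sub τ p
  | .forget _ τ, false :: p => sub τ p
  | .plus τ₁ _, false :: p => sub τ₁ p
  | .plus _ τ₂, true :: p => sub τ₂ p
  | _, _ => none

/-- Label of a node. -/
abbrev la (τ : STT (Set AP) Γ) (p : List Bool) := (STT.toTree τ).labelAt p

theorem la_sub (τ : STT (Set AP) Γ) : ∀ (n : List Bool) (σ : STT (Set AP) Γ),
    sub τ n = some σ → ∀ p, la τ (n ++ p) = la σ p := by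
  induction τ with
  | atom i a =>
    intro n σ h p
    cases n with
    | nil => simp [sub] at h; subst h; rfl
    | cons b n => simp [sub] at h
  | add γ i j τ ih =>
    intro n σ h p
    cases n with
    | nil => simp [sub] at h; subst h; rfl
    | cons b n =>
      cases b
      · exact ih n σ (by simpa [sub] using h) p
      · simp [sub] at h
  | forget i τ ih =>
    intro n σ h p
    cases n with
    | nil => simp [sub] at h; subst h; rfl
    | cons b n =>
      cases b
      · exact ih n σ (by simpa [sub] using h) p
      · simp [sub] at h
  | plus τ₁ τ₂ ih₁ ih₂ =>
    intro n σ h p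
    cases n with
    | nil => simp [sub] at h; subst h; rfl
    | cons b n =>
      cases b
      · exact ih₁ n σ (by simpa [sub] using h) p
      · exact ih₂ n σ (by simpa [sub] using h) p

theorem valid_sub (k : ℕ) (τ : STT (Set AP) Γ) : ∀ (n : List Bool) (σ : STT (Set AP) Γ),
    sub τ n = some σ → τ.Valid k → σ.Valid k := by
  induction τ with
  | atom i a =>
    intro n σ h hv
    cases n with
    | nil => simp [sub] at h; subst h; exact hv
    | cons b n => simp [sub] at h
  | add γ i j τ ih =>
    intro n σ h hv
    cases n with
    | nil => simp [sub] at h; subst h; exact hv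
    | cons b n =>
      cases b
      · exact ih n σ (by simpa [sub] using h) hv.2.2.2.2
      · simp [sub] at h
  | forget i τ ih =>
    intro n σ h hv
    cases n with
    | nil => simp [sub] at h; subst h; exact hv
    | cons b n =>
      cases b
      · exact ih n σ (by simpa [sub] using h) hv.2.2
      · simp [sub] at h
  | plus τ₁ τ₂ ih₁ ih₂ =>
    intro n σ h hv
    cases n with
    | nil => simp [sub] at h; subst h; exact hv
    | cons b n =>
      cases b
      · exact ih₁ n σ (by simpa [sub] using h) hv.1
      · exact ih₂ n σ (by simpa [sub] using h) hv.2.1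

/-- An `add` label determines a subterm. -/
theorem sub_of_la (γ : Γ) (i j : ℕ) (τ : STT (Set AP) Γ) : ∀ n : List Bool,
    la τ n = some (.add γ i j) → ∃ ρ, sub τ n = some (.add γ i j ρ) := by
  induction τ with
  | atom i a => intro n h; rcases n with _ | ⟨_ | _, n⟩ <;> simp [la, STT.toTree, BTree.labelAt] at h
  | add γ i j τ ih =>
    intro n h
    rcases n with _ | ⟨_ | _, n⟩
    · simp [la, STT.toTree, BTree.labelAt] at h
      obtain ⟨rfl, rfl, rfl⟩ := h
      exact ⟨τ, by simp [sub]⟩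
    · simpa [sub] using ih n h
    · simp [la, STT.toTree, BTree.labelAt] at h
  | forget i τ ih =>
    intro n h
    rcases n with _ | ⟨_ | _, n⟩
    · simp [la, STT.toTree, BTree.labelAt] at h
    · simpa [sub] using ih n h
    · simp [la, STT.toTree, BTree.labelAt] at h
  | plus τ₁ τ₂ ih₁ ih₂ =>
    intro n h
    rcases n with _ | ⟨_ | _, n⟩
    · simp [la, STT.toTree, BTree.labelAt] at h
    · simpa [sub] using ih₁ n h
    · simpa [sub] using ih₂ n h

theorem vlabel_iff (τ : STT (Set AP) Γ) : ∀ (p : List Bool) (s : Set AP),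
    τ.vlabel p = some s ↔ ∃ i, la τ p = some (.atom i s) := by
  induction τ with
  | atom i a => intro p s; rcases p with _ | ⟨_ | _, p⟩ <;> simp [STT.vlabel, la, STT.toTree, BTree.labelAt]
  | add γ i j τ ih =>
    intro p s; rcases p with _ | ⟨_ | _, p⟩ <;> simp [STT.vlabel, la, STT.toTree, BTree.labelAt]
    exact ih p s
  | forget i τ ih =>
    intro p s; rcases p with _ | ⟨_ | _, p⟩ <;> simp [STT.vlabel, la, STT.toTree, BTree.labelAt]
    exact ih p s
  | plus τ₁ τ₂ ih₁ ih₂ =>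
    intro p s; rcases p with _ | ⟨_ | _, p⟩ <;> simp [STT.vlabel, la, STT.toTree, BTree.labelAt]
    · exact ih₁ p s
    · exact ih₂ p s

theorem vert_iff (τ : STT (Set AP) Γ) : ∀ p : List Bool,
    (τ.vlabel p).isSome = true ↔ (la τ p).isSome = true ∧ ¬ (la τ (p ++ [false])).isSome = true := by
  induction τ with
  | atom i a => intro p; rcases p with _ | ⟨_ | _, p⟩ <;> simp [STT.vlabel, la, STT.toTree, BTree.labelAt]
  | add γ i j τ ih =>
    intro p
    rcases p with _ | ⟨_ | _, p⟩
    · cases τ <;> simp [STT.vlabel, la, STT.toTree, BTree.labelAt]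
    · exact ih p
    · simp [STT.vlabel, la, STT.toTree, BTree.labelAt]
  | forget i τ ih =>
    intro p
    rcases p with _ | ⟨_ | _, p⟩
    · cases τ <;> simp [STT.vlabel, la, STT.toTree, BTree.labelAt]
    · exact ih p
    · simp [STT.vlabel, la, STT.toTree, BTree.labelAt]
  | plus τ₁ τ₂ ih₁ ih₂ =>
    intro p
    rcases p with _ | ⟨_ | _, p⟩
    · cases τ₁ <;> simp [STT.vlabel, la, STT.toTree, BTree.labelAt]
    · exact ih₁ p
    · exact ih₂ p

theorem mem_vert_iff (τ : STT (Set AP) Γ) (p : List Bool) :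
    p ∈ τ.vertices ↔ p ∈ (STT.toTree τ).positions ∧ ¬ p ++ [false] ∈ (STT.toTree τ).positions :=
  vert_iff τ p

theorem pos_prefix (t : BTree (STTLabel (Set AP) Γ)) : ∀ p q : List Bool,
    p ++ q ∈ t.positions → p ∈ t.positions := by
  induction t with
  | leaf l =>
    intro p q h
    rcases p with _ | ⟨_ | _, p⟩ <;> simp_all [BTree.positions, BTree.labelAt]
  | unary l t ih =>
    intro p q h
    rcases p with _ | ⟨_ | _, p⟩
    · simp [BTree.positions, BTree.labelAt]
    · exact ih p q h
    · simp [BTree.positions, BTree.labelAt] at h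
  | binary l t₁ t₂ ih₁ ih₂ =>
    intro p q h
    rcases p with _ | ⟨_ | _, p⟩
    · simp [BTree.positions, BTree.labelAt]
    · exact ih₁ p q h
    · exact ih₂ p q h

theorem chi_active (τ : STT (Set AP) Γ) (i : ℕ) : ∀ p, τ.chi i = some p → i ∈ τ.activeColors := by
  induction τ with
  | atom j a => intro p h; simp only [STT.chi] at h; split at h <;> simp_all [STT.activeColors]
  | add γ a b τ ih =>
    intro p h; simp only [STT.chi, Option.map_eq_some_iff] at h
    obtain ⟨q, hq, -⟩ := h
    exact ih q hq
  | forget j τ ih =>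
    intro p h; simp only [STT.chi] at h
    split at h
    · simp at h
    · simp only [Option.map_eq_some_iff] at h
      obtain ⟨q, hq, -⟩ := h
      exact ⟨ih q hq, by simpa⟩
  | plus τ₁ τ₂ ih₁ ih₂ =>
    intro p h; simp only [STT.chi] at h
    split at h
    · rename_i q hq
      exact Or.inl (ih₁ q hq)
    · simp only [Option.map_eq_some_iff] at h
      obtain ⟨q, hq, -⟩ := h
      exact Or.inr (ih₂ q hq)

/-- Path characterization of the coloring. -/
def CP (τ : STT (Set AP) Γ) (i : ℕ) (p : List Bool) : Prop :=
  (∃ a, la τ p = some (.atom i a)) ∧ ∀ q, q <+: p → la τ q ≠ some (.forget i)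

theorem prefix_forall (b : Bool) (p : List Bool) (P : List Bool → Prop) :
    (∀ q, q <+: b :: p → P q) ↔ P [] ∧ ∀ q, q <+: p → P (b :: q) := by
  constructor
  · intro h
    exact ⟨h _ List.nil_prefix, fun q hq => h _ (by simpa using hq)⟩
  · rintro ⟨h1, h2⟩ q hq
    rcases List.prefix_cons_iff.1 hq with rfl | ⟨q', rfl, hq'⟩
    · exact h1
    · exact h2 q' hq'

theorem chi_iff (k : ℕ) (τ : STT (Set AP) Γ) (i : ℕ) : τ.Valid k → ∀ p,
    (τ.chi i = some p ↔ CP τ i p) := by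
  induction τ with
  | atom j a =>
    intro _ p
    rcases p with _ | ⟨_ | _, p⟩ <;>
      simp [STT.chi, CP, la, STT.toTree, BTree.labelAt, eq_comm]
  | add γ a b τ ih =>
    intro hv p
    have ih := ih hv.2.2.2.2
    rcases p with _ | ⟨_ | _, p⟩
    · simp [STT.chi, CP, la, STT.toTree, BTree.labelAt]
    · have := ih p
      simp [STT.chi, this, CP, la, STT.toTree, BTree.labelAt, prefix_forall]
    · simp [STT.chi, CP, la, STT.toTree, BTree.labelAt]
  | forget j τ ih =>
    intro hv p
    have ih := ih hv.2.2
    rcases p with _ | ⟨_ | _, p⟩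
    · simp [STT.chi, CP, la, STT.toTree, BTree.labelAt]
    · have := ih p
      by_cases hij : i = j
      · simp [STT.chi, hij, CP, la, STT.toTree, BTree.labelAt, prefix_forall]
      · have hji : ¬ j = i := fun h => hij h.symm
        simp [STT.chi, hij, hji, this, CP, la, STT.toTree, BTree.labelAt, prefix_forall]
    · simp [STT.chi, CP, la, STT.toTree, BTree.labelAt]
  | plus τ₁ τ₂ ih₁ ih₂ =>
    intro hv p
    obtain ⟨hv₁, hv₂, hd⟩ := hv
    have ih₁ := ih₁ hv₁
    have ih₂ := ih₂ hv₂
    rcases p with _ | ⟨_ | _, p⟩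
    · simp only [STT.chi]
      split <;> simp [CP, la, STT.toTree, BTree.labelAt]
    · have := ih₁ p
      have h2 : (STT.plus τ₁ τ₂).chi i = some (false :: p) ↔ τ₁.chi i = some p := by
        simp only [STT.chi]
        split <;> simp_all
      rw [h2, this]
      simp [CP, la, STT.toTree, BTree.labelAt, prefix_forall]
    · have := ih₂ p
      have h2 : (STT.plus τ₁ τ₂).chi i = some (true :: p) ↔ τ₂.chi i = some p := by
        simp only [STT.chi]
        split
        · rename_i q hq
          have h3 := chi_active _ _ _ hq
          constructor
          · simp
          · intro h
            exact absurd (chi_active _ _ _ h) (Set.disjoint_left.1 hd h3)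
        · simp
      rw [h2, this]
      simp [CP, la, STT.toTree, BTree.labelAt, prefix_forall]

theorem edge_iff (γ : Γ) (τ : STT (Set AP) Γ) : ∀ u v, τ.edgeRel γ u v ↔
    ∃ n i j ρ, sub τ n = some (.add γ i j ρ) ∧ ∃ pu pv,
      (STT.add γ i j ρ).chi i = some pu ∧ (STT.add γ i j ρ).chi j = some pv ∧
      u = n ++ pu ∧ v = n ++ pv := by
  induction τ with
  | atom i a =>
    intro u v
    simp only [STT.edgeRel, false_iff]
    rintro ⟨n, i, j, ρ, h, -⟩
    rcases n with _ | ⟨_ | _, n⟩ <;> simp [sub] at h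
  | add γ' i j τ ih =>
    intro u v
    simp only [STT.edgeRel]
    constructor
    · rintro (⟨u', v', rfl, rfl, h⟩ | ⟨rfl, pu, pv, h1, h2, rfl, rfl⟩)
      · obtain ⟨n, i, j, ρ, hn, pu, pv, h1, h2, rfl, rfl⟩ := (ih _ _).1 h
        exact ⟨false :: n, i, j, ρ, hn, pu, pv, h1, h2, rfl, rfl⟩
      · exact ⟨[], i, j, τ, by simp [sub], false :: pu, false :: pv, by simp [STT.chi, h1],
          by simp [STT.chi, h2], rfl, rfl⟩
    · rintro ⟨n, i', j', ρ, h, pu, pv, h1, h2, rfl, rfl⟩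
      rcases n with _ | ⟨_ | _, n⟩
      · simp [sub] at h
        obtain ⟨rfl, rfl, rfl, rfl⟩ := h
        simp only [STT.chi, Option.map_eq_some_iff] at h1 h2
        obtain ⟨a, ha, rfl⟩ := h1
        obtain ⟨b, hb, rfl⟩ := h2
        exact Or.inr ⟨rfl, a, b, ha, hb, rfl, rfl⟩
      · exact Or.inl ⟨_, _, rfl, rfl, (ih _ _).2 ⟨n, i', j', ρ, h, pu, pv, h1, h2, rfl, rfl⟩⟩
      · simp [sub] at h
  | forget i τ ih =>
    intro u v
    simp only [STT.edgeRel]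
    constructor
    · rintro ⟨u', v', rfl, rfl, h⟩
      obtain ⟨n, i, j, ρ, hn, pu, pv, h1, h2, rfl, rfl⟩ := (ih _ _).1 h
      exact ⟨false :: n, i, j, ρ, hn, pu, pv, h1, h2, rfl, rfl⟩
    · rintro ⟨n, i', j', ρ, h, pu, pv, h1, h2, rfl, rfl⟩
      rcases n with _ | ⟨_ | _, n⟩
      · simp [sub] at h
      · exact ⟨_, _, rfl, rfl, (ih _ _).2 ⟨n, i', j', ρ, h, pu, pv, h1, h2, rfl, rfl⟩⟩
      · simp [sub] at h
  | plus τ₁ τ₂ ih₁ ih₂ =>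
    intro u v
    simp only [STT.edgeRel]
    constructor
    · rintro (⟨u', v', rfl, rfl, h⟩ | ⟨u', v', rfl, rfl, h⟩)
      · obtain ⟨n, i, j, ρ, hn, pu, pv, h1, h2, rfl, rfl⟩ := (ih₁ _ _).1 h
        exact ⟨false :: n, i, j, ρ, hn, pu, pv, h1, h2, rfl, rfl⟩
      · obtain ⟨n, i, j, ρ, hn, pu, pv, h1, h2, rfl, rfl⟩ := (ih₂ _ _).1 h
        exact ⟨true :: n, i, j, ρ, hn, pu, pv, h1, h2, rfl, rfl⟩
    · rintro ⟨n, i', j', ρ, h, pu, pv, h1, h2, rfl, rfl⟩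
      rcases n with _ | ⟨_ | _, n⟩
      · simp [sub] at h
      · exact Or.inl ⟨_, _, rfl, rfl, (ih₁ _ _).2 ⟨n, i', j', ρ, h, pu, pv, h1, h2, rfl, rfl⟩⟩
      · exact Or.inr ⟨_, _, rfl, rfl, (ih₂ _ _).2 ⟨n, i', j', ρ, h, pu, pv, h1, h2, rfl, rfl⟩⟩

theorem edge_dom (k : ℕ) (τ : STT (Set AP) Γ) (hv : τ.Valid k) (γ : Γ) (u v : List Bool)
    (h : τ.edgeRel γ u v) : u ∈ τ.vertices ∧ v ∈ τ.vertices := by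
  obtain ⟨n, i, j, ρ, hn, pu, pv, h1, h2, rfl, rfl⟩ := (edge_iff γ τ u v).1 h
  have hs := valid_sub k τ n _ hn hv
  obtain ⟨⟨a, ha⟩, -⟩ := (chi_iff k _ i hs pu).1 h1
  obtain ⟨⟨b, hb⟩, -⟩ := (chi_iff k _ j hs pv).1 h2
  rw [← la_sub τ n _ hn] at ha hb
  have e1 := (vlabel_iff τ (n ++ pu) a).2 ⟨_, ha⟩
  have e2 := (vlabel_iff τ (n ++ pv) b).2 ⟨_, hb⟩
  constructor
  · show (τ.vlabel _).isSome = true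
    rw [e1]; rfl
  · show (τ.vlabel _).isSome = true
    rw [e2]; rfl

/-! Formulas -/

/-- Has a `0`-child. -/
def inner : IcS (APk AP Γ) Bool :=
  .diam (.base false) (.or (.prop .plus) (.not (.prop .plus)))

/-- One step up to a node which is not labeled `Forget_i`. -/
def upStep (i : ℕ) : IcP (APk AP Γ) Bool :=
  .comp (.plus (.conv (.base false)) (.conv (.base true))) (.test (.not (.prop (.forget i))))

/-- From an `i`-colored leaf up to an ancestor. -/
def up (i : ℕ) : IcP (APk AP Γ) Bool :=
  .comp (.test (.prop (.color i))) (.star (upStep i))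

def bigPlus (f : ℕ → IcP (APk AP Γ) Bool) : ℕ → IcP (APk AP Γ) Bool
  | 0 => f 1
  | m + 1 => .plus (bigPlus f m) (f (m + 2))

def edgeIJ (γ : Γ) (i j : ℕ) : IcP (APk AP Γ) Bool :=
  .comp (up i) (.comp (.test (.prop (.add γ i j))) (.conv (up j)))

def edgeF (k : ℕ) (γ : Γ) : IcP (APk AP Γ) Bool :=
  bigPlus (fun i => bigPlus (fun j => edgeIJ γ i j) (k - 1)) (k - 1)

mutual
  def trS (k : ℕ) : IcS AP Γ → IcS (APk AP Γ) Bool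
    | .prop p => .prop (.base p)
    | .or σ₁ σ₂ => .or (trS k σ₁) (trS k σ₂)
    | .not σ => .not (.or (trS k σ) inner)
    | .diam π σ => .diam (trP k π) (trS k σ)
    | .loop π => .loop (trP k π)
  def trP (k : ℕ) : IcP AP Γ → IcP (APk AP Γ) Bool
    | .base γ => edgeF k γ
    | .test σ => .test (trS k σ)
    | .plus π₁ π₂ => .plus (trP k π₁) (trP k π₂)
    | .comp π₁ π₂ => .comp (trP k π₁) (trP k π₂)
    | .star π => .comp (.test (.not inner)) (.star (trP k π))
    | .conv π => .conv (trP k π)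
    | .inter π₁ π₂ => .inter (trP k π₁) (trP k π₂)
end

def trF (k : ℕ) : IcSentence AP Γ → IcSentence (APk AP Γ) Bool
  | .ex σ => .ex (trS k σ)
  | .or Φ₁ Φ₂ => .or (trF k Φ₁) (trF k Φ₂)
  | .not Φ => .not (trF k Φ)

/-! Size -/

theorem bigPlus_size (f : ℕ → IcP (APk AP Γ) Bool) (s : ℕ) (hf : ∀ i, (f i).size ≤ s) (m : ℕ) :
    (bigPlus f m).size ≤ (m + 1) * (s + 1) := by
  induction m with
  | zero => have := hf 1; simp [bigPlus]; omega
  | succ m ih =>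
    have := hf (m + 2)
    simp only [bigPlus, IcP.size]
    rw [add_mul (m + 1) 1]
    omega

theorem edgeF_size (k : ℕ) (hk : 0 < k) (γ : Γ) :
    (edgeF (AP := AP) k γ).size ≤ 50 * k ^ 2 := by
  have h1 : ∀ i j, (edgeIJ (AP := AP) γ i j).size ≤ 40 := by
    intro i j
    simp [edgeIJ, up, upStep, IcP.size, IcS.size]
  have h2 : ∀ i, (bigPlus (fun j => edgeIJ (AP := AP) γ i j) (k - 1)).size ≤ (k - 1 + 1) * 41 :=
    fun i => bigPlus_size _ 40 (h1 i) _
  have h3 := bigPlus_size _ _ h2 (k - 1)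
  have e : k - 1 + 1 = k := by omega
  rw [e] at h3
  refine h3.trans ?_
  nlinarith

mutual
theorem trS_size (k : ℕ) (hk : 0 < k) : ∀ σ : IcS AP Γ, (trS k σ).size ≤ 50 * k ^ 2 * σ.size
  | .prop p => by
    have : 0 < k ^ 2 := by positivity
    simp [trS, IcS.size]; omega
  | .or σ₁ σ₂ => by
    have : 0 < k ^ 2 := by positivity
    have := trS_size k hk σ₁
    have := trS_size k hk σ₂
    simp only [trS, IcS.size, mul_add]; omega
  | .not σ => by
    have : 0 < k ^ 2 := by positivity
    have := trS_size k hk σ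
    simp only [trS, IcS.size, IcP.size, inner, mul_add]; omega
  | .diam π σ => by
    have : 0 < k ^ 2 := by positivity
    have := trS_size k hk σ
    have := trP_size k hk π
    simp only [trS, IcS.size, mul_add]; omega
  | .loop π => by
    have : 0 < k ^ 2 := by positivity
    have := trP_size k hk π
    simp only [trS, IcS.size, mul_add]; omega
theorem trP_size (k : ℕ) (hk : 0 < k) : ∀ π : IcP AP Γ, (trP k π).size ≤ 50 * k ^ 2 * π.size
  | .base γ => by
    have := edgeF_size (AP := AP) k hk γ
    simp only [trP, IcP.size, mul_one]; omega
  | .test σ => by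
    have : 0 < k ^ 2 := by positivity
    have := trS_size k hk σ
    simp only [trP, IcP.size, mul_add]; omega
  | .plus π₁ π₂ => by
    have : 0 < k ^ 2 := by positivity
    have := trP_size k hk π₁
    have := trP_size k hk π₂
    simp only [trP, IcP.size, mul_add]; omega
  | .comp π₁ π₂ => by
    have : 0 < k ^ 2 := by positivity
    have := trP_size k hk π₁
    have := trP_size k hk π₂
    simp only [trP, IcP.size, mul_add]; omega
  | .star π => by
    have : 0 < k ^ 2 := by positivity
    have := trP_size k hk π
    simp only [trP, IcP.size, IcS.size, inner, mul_add]; omega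
  | .conv π => by
    have : 0 < k ^ 2 := by positivity
    have := trP_size k hk π
    simp only [trP, IcP.size, mul_add]; omega
  | .inter π₁ π₂ => by
    have : 0 < k ^ 2 := by positivity
    have := trP_size k hk π₁
    have := trP_size k hk π₂
    simp only [trP, IcP.size, mul_add]; omega
end

theorem trF_size (k : ℕ) (hk : 0 < k) (Φ : IcSentence AP Γ) :
    (trF k Φ).size ≤ 50 * k ^ 2 * Φ.size := by
  have : 0 < k ^ 2 := by positivity
  induction Φ with
  | ex σ => have := trS_size k hk σ; simp only [trF, IcSentence.size, mul_add]; omega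
  | or Φ₁ Φ₂ ih₁ ih₂ => simp only [trF, IcSentence.size, mul_add]; omega
  | not Φ ih => simp only [trF, IcSentence.size, mul_add]; omega

/-! No intersection -/

theorem bigPlus_noInter (f : ℕ → IcP (APk AP Γ) Bool) (hf : ∀ i, (f i).NoInter) (m : ℕ) :
    (bigPlus f m).NoInter := by
  induction m with
  | zero => exact hf 1
  | succ m ih => exact ⟨ih, hf _⟩

theorem edgeF_noInter (k : ℕ) (γ : Γ) : (edgeF (AP := AP) k γ).NoInter :=
  bigPlus_noInter _ (fun i => bigPlus_noInter _ (fun j => by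
    simp [edgeIJ, up, upStep, IcP.NoInter, IcS.NoInter]) _) _

mutual
theorem trS_noInter (k : ℕ) : ∀ σ : IcS AP Γ, σ.NoInter → (trS k σ).NoInter
  | .prop p => fun _ => by simp [trS, IcS.NoInter]
  | .or σ₁ σ₂ => fun h => by
    simp only [IcS.NoInter] at h
    simp only [trS, IcS.NoInter]
    exact ⟨trS_noInter k σ₁ h.1, trS_noInter k σ₂ h.2⟩
  | .not σ => fun h => by
    simp only [IcS.NoInter] at h
    simp only [trS, IcS.NoInter, inner, IcP.NoInter, and_true]
    exact trS_noInter k σ h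
  | .diam π σ => fun h => by
    simp only [IcS.NoInter] at h
    simp only [trS, IcS.NoInter]
    exact ⟨trP_noInter k π h.1, trS_noInter k σ h.2⟩
  | .loop π => fun h => by
    simp only [IcS.NoInter] at h
    simp only [trS, IcS.NoInter]
    exact trP_noInter k π h
theorem trP_noInter (k : ℕ) : ∀ π : IcP AP Γ, π.NoInter → (trP k π).NoInter
  | .base γ => fun _ => by simpa only [trP] using edgeF_noInter k γ
  | .test σ => fun h => by
    simp only [IcP.NoInter] at h
    simp only [trP, IcP.NoInter]
    exact trS_noInter k σ h
  | .plus π₁ π₂ => fun h => by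
    simp only [IcP.NoInter] at h
    simp only [trP, IcP.NoInter]
    exact ⟨trP_noInter k π₁ h.1, trP_noInter k π₂ h.2⟩
  | .comp π₁ π₂ => fun h => by
    simp only [IcP.NoInter] at h
    simp only [trP, IcP.NoInter]
    exact ⟨trP_noInter k π₁ h.1, trP_noInter k π₂ h.2⟩
  | .star π => fun h => by
    simp only [IcP.NoInter] at h
    simp only [trP, IcP.NoInter, IcS.NoInter, inner, true_and, and_true]
    exact trP_noInter k π h
  | .conv π => fun h => by
    simp only [IcP.NoInter] at h
    simp only [trP, IcP.NoInter]
    exact trP_noInter k π h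
  | .inter π₁ π₂ => fun h => by
    simp only [IcP.NoInter] at h
end

theorem trF_noInter (k : ℕ) (Φ : IcSentence AP Γ) : Φ.NoInter → (trF k Φ).NoInter := by
  induction Φ with
  | ex σ => exact trS_noInter k σ
  | or Φ₁ Φ₂ ih₁ ih₂ => exact fun h => ⟨ih₁ h.1, ih₂ h.2⟩
  | not Φ ih => exact fun h => ih h

/-! Semantics -/

section Dom
variable {V : Type} (dom : Set V) (lab : V → AP → Prop) (edge : Γ → V → V → Prop)
  (he : ∀ γ u v, edge γ u v → u ∈ dom ∧ v ∈ dom)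

mutual
theorem domS (he : ∀ γ u v, edge γ u v → u ∈ dom ∧ v ∈ dom) :
    ∀ (σ : IcS AP Γ) (v : V), icSSem dom lab edge σ v → v ∈ dom
  | .prop p => fun v h => by simp only [icSSem] at h; exact h.1
  | .or σ₁ σ₂ => fun v h => by
    simp only [icSSem] at h
    exact h.elim (domS he σ₁ v) (domS he σ₂ v)
  | .not σ => fun v h => by simp only [icSSem] at h; exact h.1
  | .diam π σ => fun v h => by
    simp only [icSSem] at h
    obtain ⟨w, hw, -⟩ := h
    exact (domP he π v w hw).1
  | .loop π => fun v h => by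
    simp only [icSSem] at h
    exact (domP he π v v h).1
theorem domP (he : ∀ γ u v, edge γ u v → u ∈ dom ∧ v ∈ dom) :
    ∀ (π : IcP AP Γ) (u v : V), icPSem dom lab edge π u v → u ∈ dom ∧ v ∈ dom
  | .base γ => fun u v h => by simp only [icPSem] at h; exact he γ u v h
  | .test σ => fun u v h => by
    simp only [icPSem] at h
    obtain ⟨rfl, h⟩ := h
    exact ⟨domS he σ u h, domS he σ u h⟩
  | .plus π₁ π₂ => fun u v h => by
    simp only [icPSem] at h
    exact h.elim (domP he π₁ u v) (domP he π₂ u v)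
  | .comp π₁ π₂ => fun u v h => by
    simp only [icPSem] at h
    obtain ⟨w, h1, h2⟩ := h
    exact ⟨(domP he π₁ u w h1).1, (domP he π₂ w v h2).2⟩
  | .star π => fun u v h => by
    simp only [icPSem] at h
    rcases h with ⟨h, rfl⟩ | h
    · exact ⟨h, h⟩
    · have ih := domP he π
      obtain ⟨w, hw, -⟩ := Relation.TransGen.head'_iff.1 h
      obtain ⟨w', -, hw'⟩ := Relation.TransGen.tail'_iff.1 h
      exact ⟨(ih _ _ hw).1, (ih _ _ hw').2⟩
  | .conv π => fun u v h => by
    simp only [icPSem] at h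
    exact (domP he π v u h).symm
  | .inter π₁ π₂ => fun u v h => by
    simp only [icPSem] at h
    exact domP he π₁ u v h.1
end
end Dom

section Unf
variable {A B V : Type} (d : Set V) (l : V → A → Prop) (e : B → V → V → Prop)

theorem sem_not (σ : IcS A B) (v : V) :
    icSSem d l e (.not σ) v ↔ v ∈ d ∧ ¬ icSSem d l e σ v := by rw [icSSem]
theorem sem_or (σ₁ σ₂ : IcS A B) (v : V) :
    icSSem d l e (.or σ₁ σ₂) v ↔ icSSem d l e σ₁ v ∨ icSSem d l e σ₂ v := by rw [icSSem]
theorem sem_prop (p : A) (v : V) :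
    icSSem d l e (.prop p : IcS A B) v ↔ v ∈ d ∧ l v p := by rw [icSSem]
theorem sem_base (γ : B) (u v : V) :
    icPSem d l e (.base γ : IcP A B) u v ↔ e γ u v := by rw [icPSem]
theorem sem_test (σ : IcS A B) (u v : V) :
    icPSem d l e (.test σ) u v ↔ u = v ∧ icSSem d l e σ u := by rw [icPSem]
theorem sem_comp (π₁ π₂ : IcP A B) (u v : V) :
    icPSem d l e (.comp π₁ π₂) u v ↔ ∃ w, icPSem d l e π₁ u w ∧ icPSem d l e π₂ w v := by
  rw [icPSem]
theorem sem_star (π : IcP A B) (u v : V) :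
    icPSem d l e (.star π) u v ↔ (u ∈ d ∧ u = v) ∨
      Relation.TransGen (fun a b => icPSem d l e π a b) u v := by
  rw [icPSem]

end Unf

section Sem
variable (τ : STT (Set AP) Γ)

abbrev tS (σ : IcS (APk AP Γ) Bool) (v : List Bool) : Prop :=
  icSSem (STT.toTree τ).positions (sttTreeLab τ) (fun b u v => (STT.toTree τ).childRel b u v) σ v
abbrev tP (π : IcP (APk AP Γ) Bool) (u v : List Bool) : Prop :=
  icPSem (STT.toTree τ).positions (sttTreeLab τ) (fun b u v => (STT.toTree τ).childRel b u v) π u v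
abbrev gS (σ : IcS AP Γ) (v : List Bool) : Prop :=
  icSSem τ.vertices (fun v p => ∃ s, τ.vlabel v = some s ∧ p ∈ s) τ.edgeRel σ v
abbrev gP (π : IcP AP Γ) (u v : List Bool) : Prop :=
  icPSem τ.vertices (fun v p => ∃ s, τ.vlabel v = some s ∧ p ∈ s) τ.edgeRel π u v

theorem inner_iff (v : List Bool) :
    tS τ inner v ↔ v ++ [false] ∈ (STT.toTree τ).positions := by
  simp only [tS, inner, icSSem, icPSem, BTree.childRel]
  constructor
  · rintro ⟨w, ⟨rfl, h⟩, -⟩; exact h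
  · intro h
    exact ⟨_, ⟨rfl, h⟩, by tauto⟩

theorem lab_base (v : List Bool) (p : AP) :
    sttTreeLab τ v (.base p) ↔ ∃ s, τ.vlabel v = some s ∧ p ∈ s := by
  simp only [vlabel_iff, sttTreeLab, la]
  split <;> simp_all

theorem lab_color (v : List Bool) (i : ℕ) :
    sttTreeLab τ v (.color i) ↔ ∃ s, la τ v = some (.atom i s) := by
  simp only [sttTreeLab, la]
  split <;> rename_i heq <;> rw [heq] <;> simp [eq_comm]

theorem lab_forget (v : List Bool) (i : ℕ) :
    sttTreeLab τ v (.forget i) ↔ la τ v = some (.forget i) := by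
  simp only [sttTreeLab, la]
  split <;> rename_i heq <;> rw [heq] <;> simp [eq_comm]

theorem lab_add (v : List Bool) (γ : Γ) (i j : ℕ) :
    sttTreeLab τ v (.add γ i j) ↔ la τ v = some (.add γ i j) := by
  simp only [sttTreeLab, la]
  split <;> rename_i heq <;> rw [heq] <;> simp [eq_comm]

theorem pos_of_la {v : List Bool} {l} (h : la τ v = some l) : v ∈ (STT.toTree τ).positions := by
  show (la τ v).isSome = true
  rw [h]; rfl

theorem upStep_iff (i : ℕ) (u v : List Bool) : tP τ (upStep i) u v ↔
    ∃ b, u = v ++ [b] ∧ u ∈ (STT.toTree τ).positions ∧ la τ v ≠ some (.forget i) := by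
  simp only [tP, upStep, icPSem, icSSem, BTree.childRel, lab_forget]
  constructor
  · rintro ⟨w, h, rfl, hw, h2⟩
    have : la τ w ≠ some (.forget i) := fun h => h2 ⟨hw, h⟩
    rcases h with h | h
    · exact ⟨false, h.1, h.2, this⟩
    · exact ⟨true, h.1, h.2, this⟩
  · rintro ⟨b, rfl, h2, h3⟩
    refine ⟨v, ?_, rfl, pos_prefix _ _ _ h2, fun h => h3 h.2⟩
    cases b <;> simp [h2]

theorem upStar_iff (i : ℕ) (u n : List Bool) (hu : u ∈ (STT.toTree τ).positions) :
    tP τ (.star (upStep i)) u n ↔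
    ∃ p, u = n ++ p ∧ ∀ q, q <+: p → q ≠ p → la τ (n ++ q) ≠ some (.forget i) := by
  have h0 : tP τ (.star (upStep i)) u n ↔ Relation.ReflTransGen (tP τ (upStep i)) u n := by
    rw [Relation.reflTransGen_iff_eq_or_transGen]
    simp only [tP, sem_star]
    constructor
    · rintro (⟨-, rfl⟩ | h)
      · exact Or.inl rfl
      · exact Or.inr h
    · rintro (rfl | h)
      · exact Or.inl ⟨hu, rfl⟩
      · exact Or.inr h
  rw [h0]
  clear h0
  constructor
  · intro h
    induction h with
    | refl =>
      refine ⟨[], by simp, ?_⟩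
      intro q hq hq'
      exact absurd (List.prefix_nil.1 hq) hq'
    | tail _ hstep ih =>
      rename_i b c
      obtain ⟨p, rfl, hp⟩ := ih
      obtain ⟨x, rfl, -, h3⟩ := (upStep_iff τ i _ _).1 hstep
      refine ⟨x :: p, by simp, ?_⟩
      intro q hq hne
      rcases List.prefix_cons_iff.1 hq with rfl | ⟨q', rfl, hq'⟩
      · simpa using h3
      · have := hp q' hq' (by rintro rfl; exact hne rfl)
        simpa using this
  · rintro ⟨p, rfl, hp⟩
    induction p generalizing n with
    | nil => simpa using Relation.ReflTransGen.refl
    | cons b p ih =>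
      have e : n ++ b :: p = (n ++ [b]) ++ p := by simp
      have h1 := ih (n ++ [b]) (by
        intro q hq hne
        have := hp (b :: q) (by simpa using hq) (by simpa using hne)
        simpa using this) (by rw [← e]; exact hu)
      rw [e]
      refine h1.tail ((upStep_iff τ i _ _).2 ⟨b, rfl, pos_prefix _ _ p (by rw [← e]; exact hu), ?_⟩)
      have := hp [] (by simp) (by simp)
      simpa using this

theorem up_iff (k : ℕ) (hv : τ.Valid k) (i : ℕ) (n : List Bool) (σ : STT (Set AP) Γ)
    (hs : sub τ n = some σ) (u : List Bool) :
    tP τ (up i) u n ↔ ∃ p, u = n ++ p ∧ σ.chi i = some p := by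
  have hσ := valid_sub k τ n σ hs hv
  have hl := la_sub τ n σ hs
  have e : tP τ (up i) u n ↔ (u ∈ (STT.toTree τ).positions ∧ ∃ s, la τ u = some (.atom i s)) ∧
      tP τ (.star (upStep i)) u n := by
    simp only [tP, up, sem_comp, sem_test, sem_prop, lab_color]
    constructor
    · rintro ⟨w, ⟨rfl, h1⟩, h2⟩
      exact ⟨h1, h2⟩
    · rintro ⟨h1, h2⟩
      exact ⟨u, ⟨rfl, h1⟩, h2⟩
  rw [e]
  constructor
  · rintro ⟨⟨hu, s, hs⟩, h⟩
    obtain ⟨p, rfl, hp⟩ := (upStar_iff τ i u n hu).1 h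
    refine ⟨p, rfl, (chi_iff k σ i hσ p).2 ⟨⟨s, by rw [← hl]; exact hs⟩, ?_⟩⟩
    intro q hq
    rw [← hl]
    by_cases hqp : q = p
    · subst hqp; rw [hs]; simp
    · exact hp q hq hqp
  · rintro ⟨p, rfl, h⟩
    obtain ⟨⟨a, ha⟩, h2⟩ := (chi_iff k σ i hσ p).1 h
    rw [← hl] at ha
    have hu := pos_of_la τ ha
    refine ⟨⟨hu, a, ha⟩, (upStar_iff τ i _ n hu).2 ⟨p, rfl, ?_⟩⟩
    intro q hq _
    rw [hl]
    exact h2 q hq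

theorem bigPlus_iff (f : ℕ → IcP (APk AP Γ) Bool) (m : ℕ) (u v : List Bool) :
    tP τ (bigPlus f m) u v ↔ ∃ i, 1 ≤ i ∧ i ≤ m + 1 ∧ tP τ (f i) u v := by
  induction m with
  | zero =>
    constructor
    · intro h; exact ⟨1, le_rfl, le_rfl, h⟩
    · rintro ⟨i, h1, h2, h⟩
      obtain rfl : i = 1 := by omega
      exact h
  | succ m ih =>
    have : tP τ (bigPlus f (m + 1)) u v ↔ tP τ (bigPlus f m) u v ∨ tP τ (f (m + 2)) u v := by
      simp only [tP, bigPlus]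
      rw [icPSem]
    rw [this, ih]
    constructor
    · rintro (⟨i, h1, h2, h⟩ | h)
      · exact ⟨i, h1, by omega, h⟩
      · exact ⟨m + 2, by omega, by omega, h⟩
    · rintro ⟨i, h1, h2, h⟩
      by_cases hi : i = m + 2
      · subst hi; exact Or.inr h
      · exact Or.inl ⟨i, h1, by omega, h⟩

theorem edgeIJ_iff (γ : Γ) (i j : ℕ) (u v : List Bool) :
    tP τ (edgeIJ γ i j) u v ↔ ∃ n, tP τ (up i) u n ∧ la τ n = some (.add γ i j) ∧ tP τ (up j) v n := by
  have hc : ∀ (π : IcP (APk AP Γ) Bool) (a b : List Bool), tP τ (.conv π) a b ↔ tP τ π b a := by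
    intro π a b
    simp only [tP]
    rw [icPSem]
  simp only [tP] at hc
  simp only [tP, edgeIJ, sem_comp, sem_test, sem_prop, lab_add, hc]
  constructor
  · rintro ⟨n, h1, _, ⟨rfl, h2⟩, h3⟩
    exact ⟨n, h1, h2.2, h3⟩
  · rintro ⟨n, h1, h2, h3⟩
    exact ⟨n, h1, n, ⟨rfl, pos_of_la τ h2, h2⟩, h3⟩

theorem edgeF_iff (k : ℕ) (hk : 0 < k) (hv : τ.Valid k) (γ : Γ) (u v : List Bool) :
    tP τ (edgeF k γ) u v ↔ τ.edgeRel γ u v := by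
  have ek : k - 1 + 1 = k := by omega
  rw [edge_iff, edgeF, bigPlus_iff]
  simp only [bigPlus_iff, edgeIJ_iff, ek]
  constructor
  · rintro ⟨i, -, -, j, -, -, n, h1, h2, h3⟩
    obtain ⟨ρ, hρ⟩ := sub_of_la γ i j τ n h2
    obtain ⟨pu, rfl, hpu⟩ := (up_iff τ k hv i n _ hρ u).1 h1
    obtain ⟨pv, rfl, hpv⟩ := (up_iff τ k hv j n _ hρ v).1 h3
    exact ⟨n, i, j, ρ, hρ, pu, pv, hpu, hpv, rfl, rfl⟩
  · rintro ⟨n, i, j, ρ, hρ, pu, pv, hpu, hpv, rfl, rfl⟩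
    obtain ⟨a1, a2, a3, a4, -⟩ := valid_sub k τ n _ hρ hv
    refine ⟨i, a1, a2, j, a3, a4, n, (up_iff τ k hv i n _ hρ _).2 ⟨pu, rfl, hpu⟩, ?_,
      (up_iff τ k hv j n _ hρ _).2 ⟨pv, rfl, hpv⟩⟩
    have := la_sub τ n _ hρ []
    rw [List.append_nil] at this
    rw [this]
    rfl

mutual
theorem semS (k : ℕ) (hk : 0 < k) (hv : τ.Valid k) :
    ∀ (σ : IcS AP Γ), tS τ (trS k σ) = gS τ σ
  | .prop p => by
    funext v
    simp only [tS, gS, trS, icSSem, lab_base, mem_vert_iff, eq_iff_iff]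
    constructor
    · rintro ⟨h1, s, h2, h3⟩
      exact ⟨(mem_vert_iff τ v).1 (by show (τ.vlabel v).isSome = true; rw [h2]; rfl), s, h2, h3⟩
    · rintro ⟨h1, h2⟩
      exact ⟨h1.1, h2⟩
  | .or σ₁ σ₂ => by
    have h1 := semS k hk hv σ₁
    have h2 := semS k hk hv σ₂
    funext v
    have h1 := congrFun h1 v
    have h2 := congrFun h2 v
    simp only [tS, gS, trS, icSSem] at h1 h2 ⊢
    rw [h1, h2]
  | .not σ => by
    have h1 := semS k hk hv σ
    funext v
    have h1 := congrFun h1 v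
    have h2 := inner_iff τ v
    simp only [tS, gS] at h1 h2 ⊢
    rw [trS, sem_not, sem_or, sem_not, h1, h2, mem_vert_iff]
    simp only [eq_iff_iff]
    tauto
  | .diam π σ => by
    have h1 := semS k hk hv σ
    have h2 := semP k hk hv π
    funext v
    have h1 := fun w => congrFun h1 w
    have h2 := fun w => congrFun (congrFun h2 v) w
    simp only [tS, gS, tP, gP] at h1 h2 ⊢
    simp only [trS, icSSem, h1, h2]
  | .loop π => by
    have h2 := semP k hk hv π
    funext v
    have h2 := congrFun (congrFun h2 v) v
    simp only [tS, gS, tP, gP] at h2 ⊢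
    simp only [trS, icSSem, h2]
theorem semP (k : ℕ) (hk : 0 < k) (hv : τ.Valid k) :
    ∀ (π : IcP AP Γ), tP τ (trP k π) = gP τ π
  | .base γ => by
    funext u v
    have := edgeF_iff τ k hk hv γ u v
    simp only [tP, gP] at this ⊢
    rw [trP, this, sem_base]
  | .test σ => by
    have h1 := semS k hk hv σ
    funext u v
    have h1 := congrFun h1 u
    simp only [tS, gS, tP, gP] at h1 ⊢
    simp only [trP, icPSem, h1]
  | .plus π₁ π₂ => by
    have h1 := semP k hk hv π₁
    have h2 := semP k hk hv π₂
    funext u v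
    have h1 := fun w w' => congrFun (congrFun h1 w) w'
    have h2 := fun w w' => congrFun (congrFun h2 w) w'
    simp only [tP, gP] at h1 h2 ⊢
    simp only [trP, icPSem, h1, h2]
  | .comp π₁ π₂ => by
    have h1 := semP k hk hv π₁
    have h2 := semP k hk hv π₂
    funext u v
    have h1 := fun w w' => congrFun (congrFun h1 w) w'
    have h2 := fun w w' => congrFun (congrFun h2 w) w'
    simp only [tP, gP] at h1 h2 ⊢
    simp only [trP, icPSem, h1, h2]
  | .star π => by
    have h1 := semP k hk hv π
    funext u v
    have h1 := fun w w' => congrFun (congrFun h1 w) w'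
    have h2 := inner_iff τ u
    have hd := domP _ (fun v p => ∃ s, τ.vlabel v = some s ∧ p ∈ s) _ (edge_dom k τ hv) π
    have hm := mem_vert_iff τ u
    simp only [tP, gP, tS] at h1 h2 ⊢
    simp only [trP, sem_comp, sem_star, sem_test, h1, eq_iff_iff]
    constructor
    · rintro ⟨w, ⟨rfl, h3⟩, h4⟩
      rw [sem_not, h2, ← hm] at h3
      rcases h4 with ⟨_, rfl⟩ | h4
      · exact Or.inl ⟨h3, rfl⟩
      · exact Or.inr h4
    · intro h
      have hu : u ∈ τ.vertices := by
        rcases h with h | h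
        · exact h.1
        · obtain ⟨w, hw, -⟩ := Relation.TransGen.head'_iff.1 h
          exact (hd _ _ hw).1
      refine ⟨u, ⟨rfl, ?_⟩, ?_⟩
      · rw [sem_not, h2, ← hm]; exact hu
      · rcases h with ⟨_, rfl⟩ | h
        · exact Or.inl ⟨(hm.1 hu).1, rfl⟩
        · exact Or.inr h
  | .conv π => by
    have h1 := semP k hk hv π
    funext u v
    have h1 := fun w w' => congrFun (congrFun h1 w) w'
    simp only [tP, gP] at h1 ⊢
    simp only [trP, icPSem, h1]
  | .inter π₁ π₂ => by
    have h1 := semP k hk hv π₁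
    have h2 := semP k hk hv π₂
    funext u v
    have h1 := fun w w' => congrFun (congrFun h1 w) w'
    have h2 := fun w w' => congrFun (congrFun h2 w) w'
    simp only [tP, gP] at h1 h2 ⊢
    simp only [trP, icPSem, h1, h2]
end

theorem semF (k : ℕ) (hk : 0 < k) (hv : τ.Valid k) (Φ : IcSentence AP Γ) :
    icSentSem τ.vertices (fun v p => ∃ s, τ.vlabel v = some s ∧ p ∈ s) τ.edgeRel Φ ↔
    icSentSem (STT.toTree τ).positions (sttTreeLab τ)
      (fun b u v => (STT.toTree τ).childRel b u v) (trF k Φ) := by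
  induction Φ with
  | ex σ =>
    have h1 := fun v => congrFun (semS τ k hk hv σ) v
    have hd := domS _ (fun v p => ∃ s, τ.vlabel v = some s ∧ p ∈ s) _ (edge_dom k τ hv) σ
    simp only [tS, gS] at h1
    simp only [icSentSem, trF, h1]
    constructor
    · rintro ⟨v, hv, h⟩
      exact ⟨v, ((mem_vert_iff τ v).1 hv).1, h⟩
    · rintro ⟨v, -, h⟩
      exact ⟨v, hd v h, h⟩
  | or Φ₁ Φ₂ ih₁ ih₂ => simp only [icSentSem, trF, ih₁, ih₂]
  | not Φ ih => simp only [icSentSem, trF, ih]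

end Sem

end IcAux

/-- There exists a constant `c` such that for every finite set
`AP` of atomic propositions, finite set `Γ` of edge labels, every ICPDL
sentence `Φ` over `(AP, Γ)` and every `k > 0`, there is an ICPDL sentence
`Φ~^k` over `(AP^k, {↓0,↓1})` of size at most `c·k²·|Φ|` such that for every
valid `k`-STT `τ` with `⟦τ⟧ = (G,χ)`: `G ⊨ Φ` iff `τ ⊨ Φ~^k`.  Moreover, if `Φ`
is in LCPDL then `Φ~^k` can be chosen in LCPDL. -/
theorem icpdl_stt_interpretation :
    ∃ c : ℕ, ∀ (AP Γ : Type), Fintype AP → Fintype Γ →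
      ∀ (Φ : IcSentence AP Γ) (k : ℕ), 0 < k →
        ∃ Ψ : IcSentence (APk AP Γ) Bool,
          Ψ.size ≤ c * k ^ 2 * Φ.size ∧
          (Φ.NoInter → Ψ.NoInter) ∧
          ∀ τ : STT (Set AP) Γ, τ.Valid k →
            (icSentSem τ.vertices
                (fun v p => ∃ s, τ.vlabel v = some s ∧ p ∈ s) τ.edgeRel Φ ↔
             icSentSem (STT.toTree τ).positions (sttTreeLab τ)
                (fun b u v => (STT.toTree τ).childRel b u v) Ψ) := by
  exact ⟨50, fun AP Γ _ _ Φ k hk => ⟨IcAux.trF k Φ, IcAux.trF_size k hk Φ, IcAux.trF_noInter k Φ,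
    fun τ hv => IcAux.semF τ k hk hv Φ⟩⟩
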